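/- Let T = (V, E) be a finite tree with edge lengths T^e > 0, let σ > 0 and d ≥ 1, and let Q be the σ-finite measure on (ℝ^d)^V with density q(x) = ∏_{{u,v}∈E} (2πσ²T^{{u,v}})^{−d/2} exp(−‖x_u − x_v‖² / (2σ²T^{{u,v}})) with respect to Lebesgue measure on (ℝ^d)^V. Let S ⊆ V be nonempty and for each i ∈ S let μ_i be a probability measure on ℝ^d which is absolutely continuous with respect to Lebesgue measure with density p_i satisfying ∫ ‖x‖² dμ_i(x) < ∞ and ∫ p_i |log p_i| dx < ∞. Then there exists a unique probability measure Π* on (ℝ^d)^V with marginal at each i ∈ S equal to μ_i which minimises KL(Π ‖ Q) := ∫ log(dΠ/dQ) dΠ (interpreted in (−∞,+∞] for Π ≪ Q, and set to +∞ otherwise) over all probability measures Π on (ℝ^d)^V with marginal at each i ∈ S equal to μ_i; moreover KL(Π* ‖ Q) is finite. -/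

import Mathlib

open MeasureTheory ProbabilityTheory Classical

open scoped ENNReal

/-- Kullback-Leibler divergence of a probability measure `μ` with respect to a σ-finite
measure `ν`, valued in `(-∞, +∞]`: `KL(μ‖ν) = ∫ log(dμ/dν) dμ` when `μ ≪ ν` and the
log-likelihood ratio is `μ`-integrable, and `+∞` otherwise (in particular when `μ` is not
absolutely continuous with respect to `ν`). -/
noncomputable def KL {α : Type*} [MeasurableSpace α] (μ ν : Measure α) : EReal :=
  if μ ≪ ν ∧ Integrable (llr μ ν) μ then ((∫ x, llr μ ν x ∂μ : ℝ) : EReal) else ⊤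

/-- The squared Euclidean distance `‖x u − x v‖²` between the coordinates of `x` at the two
endpoints of an unordered edge. -/
noncomputable def sqDist {V : Type*} {d : ℕ} (x : V → EuclideanSpace ℝ (Fin d)) :
    Sym2 V → ℝ :=
  Sym2.lift ⟨fun u v => ‖x u - x v‖ ^ 2, fun u v => by simp only []; rw [norm_sub_rev]⟩

/-!
Every admissible `P` gives the same value to `∫ φ dP`, where `φ x = -∑_{i ∈ S} ‖x i‖²`, because the
marginals on `S` are prescribed. Since the energy of a connected graph controls `x` up to its value
at one vertex, `exp φ` is `Q`-integrable, and on admissible measures `KL(· ‖ Q)` differs by a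
constant from the divergence with respect to the probability measure `R ∝ exp φ · Q`. Two densities
at `L¹(R)`-distance `δ` have a midpoint whose divergence is smaller than the average by a definite
amount, so minimizing sequences over a convex set of densities are Cauchy in `L¹(R)`; Fatou's lemma
and the closedness of the marginal constraints in `L¹(R)` show that the limit is the minimizer. A
product of the given marginals has finite divergence.
-/

section WellPosedMinimization

open Filter Topology

theorem existsUnique_isMinOn_of_dist_le {X Y : Type*} [MetricSpace X] [CompleteSpace X]
    [CompleteLinearOrder Y] [DenselyOrdered Y] [TopologicalSpace Y] [OrderTopology Y]
    [FirstCountableTopology Y] {C : Set X} {J : X → Y} (hC : IsClosed C) (hne : C.Nonempty)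
    (hJ : LowerSemicontinuous J)
    (hdist : ∀ η > 0, ∃ y > sInf (J '' C), ∀ f ∈ C, ∀ g ∈ C, J f ≤ y → J g ≤ y → dist f g ≤ η) :
    ∃! f, f ∈ C ∧ IsMinOn J C f := by
  have inf_le : ∀ g ∈ C, sInf (J '' C) ≤ J g := fun g hg => sInf_le (Set.mem_image_of_mem J hg)
  obtain ⟨u, -, hu, huC⟩ := exists_seq_tendsto_sInf (hne.image J) (OrderBot.bddBelow _)
  choose F hFC hFu using huC
  have hJF : Tendsto (fun n => J (F n)) atTop (𝓝 (sInf (J '' C))) := by simpa only [hFu] using hu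
  have hcauchy : CauchySeq F := Metric.cauchySeq_iff'.2 fun η hη => by
    obtain ⟨y, hy, hyη⟩ := hdist (η / 2) (half_pos hη)
    obtain ⟨N, hN⟩ := eventually_atTop.1 (hJF.eventually_le_const hy)
    exact ⟨N, fun n hn => (hyη _ (hFC n) _ (hFC N) (hN n hn) (hN N le_rfl)).trans_lt
      (half_lt_self hη)⟩
  obtain ⟨f, hf⟩ := cauchySeq_tendsto_of_complete hcauchy
  have hfC : f ∈ C := hC.mem_of_tendsto hf (Eventually.of_forall hFC)
  have hfinf : J f ≤ sInf (J '' C) := le_of_forall_gt_imp_ge_of_dense fun y hy =>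
    (hJ.isClosed_preimage y).mem_of_tendsto hf (hJF.eventually_le_const hy)
  refine ⟨f, ⟨hfC, fun g hg => hfinf.trans (inf_le g hg)⟩, fun g ⟨hgC, hg⟩ => ?_⟩
  refine eq_of_forall_dist_le fun η hη => ?_
  obtain ⟨y, hy, hyη⟩ := hdist η hη
  exact hyη g hgC f hfC ((hg hfC).trans (hfinf.trans hy.le)) (hfinf.trans hy.le)

end WellPosedMinimization

section UniformConvexity

open InformationTheory Real

lemma two_mul_sub_two_mul_sqrt_mul_sqrt_le {a m : ℝ} (ha : 0 ≤ a) (hm : 0 < m) :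
    2 * a - 2 * √a * √m ≤ a * (log a - log m) := by
  rcases ha.eq_or_lt with rfl | ha
  · simp
  have hlog : log m / 2 - log a / 2 ≤ √m / √a - 1 := by
    rw [← log_sqrt hm.le, ← log_sqrt ha.le, ← log_div (by positivity) (by positivity)]
    exact log_le_sub_one_of_pos (by positivity)
  have hsqrt : a * (√m / √a) = √a * √m := by
    rw [mul_div_left_comm, div_sqrt, mul_comm]
  linear_combination (2 * a) * hlog + 2 * hsqrt

lemma sq_sqrt_sub_sqrt_le_klFun {a b : ℝ} (ha : 0 ≤ a) (hb : 0 ≤ b) (hab : 0 < a + b) :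
    (√a - √b) ^ 2 / 2 ≤ klFun a + klFun b - 2 * klFun ((a + b) / 2) := by
  set m := (a + b) / 2 with hm
  have hm0 : 0 < m := half_pos hab
  have gap_eq : klFun a + klFun b - 2 * klFun m
      = a * (log a - log m) + b * (log b - log m) := by
    simp only [klFun_apply]
    linear_combination (2 - 2 * log m) * hm
  have sq_add_sq : √a ^ 2 + √b ^ 2 = 2 * √m ^ 2 := by
    rw [sq_sqrt ha, sq_sqrt hb, sq_sqrt hm0.le, hm]; ring
  calc (√a - √b) ^ 2 / 2 ≤ 2 * a - 2 * √a * √m + (2 * b - 2 * √b * √m) := by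
        nlinarith [sq_nonneg (√a + √b - 2 * √m), sq_sqrt ha, sq_sqrt hb]
    _ ≤ _ := gap_eq ▸ add_le_add (two_mul_sub_two_mul_sqrt_mul_sqrt_le ha hm0)
        (two_mul_sub_two_mul_sqrt_mul_sqrt_le hb hm0)

lemma abs_sub_le_sq_sqrt_sub_sqrt {a b t : ℝ} (ha : 0 ≤ a) (hb : 0 ≤ b) (ht : 0 < t) :
    |a - b| ≤ t * ((√a - √b) ^ 2 / 2) + (a + b) / t := by
  have hfactor : |a - b| = |√a - √b| * (√a + √b) := by
    rw [← abs_of_nonneg (add_nonneg (sqrt_nonneg a) (sqrt_nonneg b)), ← abs_mul]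
    congr 1
    linear_combination sq_sqrt hb - sq_sqrt ha
  have hsum : (√a + √b) ^ 2 ≤ 2 * (a + b) := by
    nlinarith [sq_nonneg (√a - √b), sq_sqrt ha, sq_sqrt hb]
  calc |a - b| ≤ t * (|√a - √b| ^ 2 / 2) + (√a + √b) ^ 2 / (2 * t) := by
        have amgm : 0 ≤ (t * |√a - √b| - (√a + √b)) ^ 2 / (2 * t) := by positivity
        have expand : (t * |√a - √b| - (√a + √b)) ^ 2 / (2 * t)
            = t * (|√a - √b| ^ 2 / 2) + (√a + √b) ^ 2 / (2 * t) - |√a - √b| * (√a + √b) := by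
          field_simp; ring
        linarith
    _ ≤ t * (|√a - √b| ^ 2 / 2) + 2 * (a + b) / (2 * t) := by gcongr
    _ = t * ((√a - √b) ^ 2 / 2) + (a + b) / t := by
        rw [sq_abs, mul_div_mul_left _ _ two_ne_zero]

lemma abs_sub_add_klFun_midpoint_le {a b t : ℝ} (ha : 0 ≤ a) (hb : 0 ≤ b) (ht : 0 < t) :
    |a - b| + 2 * t * klFun ((a + b) / 2) ≤ t * (klFun a + klFun b) + (a + b) / t := by
  rcases (add_nonneg ha hb).eq_or_lt with hzero | hpos
  · obtain ⟨rfl, rfl⟩ := (add_eq_zero_iff_of_nonneg ha hb).1 hzero.symm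
    simp; linarith
  · linear_combination abs_sub_le_sq_sqrt_sub_sqrt ha hb ht +
      t * sq_sqrt_sub_sqrt_le_klFun ha hb hpos

end UniformConvexity

section EntropyOfDensities

open InformationTheory Filter Topology

variable {α : Type*} [MeasurableSpace α] {ρ : Measure α}

lemma lowerSemicontinuous_lintegral_comp {E : Type*} [NormedAddCommGroup E] {p : ℝ≥0∞}
    [Fact (1 ≤ p)] {G : E → ℝ≥0∞} (hG : Continuous G) :
    LowerSemicontinuous fun f : Lp E p ρ => ∫⁻ x, G (f x) ∂ρ := by
  refine lowerSemicontinuous_iff_isClosed_preimage.2 fun y => IsSeqClosed.isClosed ?_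
  intro F f hF hFf
  obtain ⟨k, -, hk⟩ := (tendstoInMeasure_of_tendsto_Lp hFf).exists_seq_tendsto_ae
  calc ∫⁻ x, G (f x) ∂ρ = ∫⁻ x, liminf (fun n => G (F (k n) x)) atTop ∂ρ :=
        lintegral_congr_ae <| hk.mono fun x hx => ((hG.tendsto _).comp hx).liminf_eq.symm
    _ ≤ liminf (fun n => ∫⁻ x, G (F (k n) x) ∂ρ) atTop := lintegral_liminf_le' fun n =>
        (hG.comp_aestronglyMeasurable (Lp.aestronglyMeasurable (F (k n)))).aemeasurable
    _ ≤ y := liminf_le_of_le (by isBoundedDefault) fun b hb =>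
        let ⟨n, hn⟩ := hb.exists; hn.trans (hF (k n))

/-- The relative entropy, with respect to `ρ`, of the measure with density `f`; it is written with
the nonnegative integrand `klFun t = t log t + 1 - t`, so that it is defined for every `f`. -/
noncomputable def densityEntropy (f : α →₁[ρ] ℝ) : ℝ≥0∞ :=
  ∫⁻ x, ENNReal.ofReal (klFun (f x)) ∂ρ

lemma lowerSemicontinuous_densityEntropy :
    LowerSemicontinuous (densityEntropy : (α →₁[ρ] ℝ) → ℝ≥0∞) :=
  lowerSemicontinuous_lintegral_comp (ENNReal.continuous_ofReal.comp continuous_klFun)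

lemma coeFn_midpoint_L1 (f g : α →₁[ρ] ℝ) :
    ∀ᵐ x ∂ρ, (midpoint ℝ f g : α →₁[ρ] ℝ) x = (f x + g x) / 2 := by
  rw [midpoint_eq_smul_add]
  filter_upwards [Lp.coeFn_smul (⅟2 : ℝ) (f + g), Lp.coeFn_add f g] with x hsmul hadd
  rw [hsmul, Pi.smul_apply, hadd, Pi.add_apply, smul_eq_mul, invOf_eq_inv]
  ring

lemma enorm_L1_eq_lintegral_enorm {E : Type*} [NormedAddCommGroup E] (f : α →₁[ρ] E) :
    ‖f‖ₑ = ∫⁻ x, ‖f x‖ₑ ∂ρ := by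
  rw [Lp.enorm_def, eLpNorm_one_eq_lintegral_enorm]

lemma enorm_sub_add_densityEntropy_midpoint_le {f g : α →₁[ρ] ℝ} (hf : 0 ≤ f) (hg : 0 ≤ g)
    {t : ℝ} (ht : 0 < t) :
    ‖f - g‖ₑ + ENNReal.ofReal (2 * t) * densityEntropy (midpoint ℝ f g)
      ≤ ENNReal.ofReal t * (densityEntropy f + densityEntropy g)
        + ENNReal.ofReal (1 / t) * (‖f‖ₑ + ‖g‖ₑ) := by
  have (h : α →₁[ρ] ℝ) : Measurable h := (L1.stronglyMeasurable_coeFn h).measurable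
  have := measurable_klFun
  have hpointwise : ∀ᵐ x ∂ρ, ‖(f - g) x‖ₑ +
      ENNReal.ofReal (2 * t) * ENNReal.ofReal (klFun (midpoint ℝ f g x))
      ≤ ENNReal.ofReal t * (ENNReal.ofReal (klFun (f x)) + ENNReal.ofReal (klFun (g x)))
        + ENNReal.ofReal (1 / t) * (‖f x‖ₑ + ‖g x‖ₑ) := by
    filter_upwards [coeFn_midpoint_L1 f g, Lp.coeFn_sub f g, (Lp.coeFn_nonneg f).2 hf,
      (Lp.coeFn_nonneg g).2 hg] with x hmx hsub hfx hgx
    have hkf := klFun_nonneg hfx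
    have hkg := klFun_nonneg hgx
    have hkm := klFun_nonneg (div_nonneg (add_nonneg hfx hgx) zero_le_two)
    simp only [Pi.zero_apply] at hfx hgx
    rw [hmx, hsub, Pi.sub_apply, Real.enorm_eq_ofReal_abs, Real.enorm_of_nonneg hfx,
      Real.enorm_of_nonneg hgx, ← ENNReal.ofReal_mul (by positivity),
      ← ENNReal.ofReal_add (abs_nonneg _) (by positivity), ← ENNReal.ofReal_add hkf hkg,
      ← ENNReal.ofReal_add hfx hgx, ← ENNReal.ofReal_mul ht.le,
      ← ENNReal.ofReal_mul (by positivity), ← ENNReal.ofReal_add (by positivity) (by positivity)]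
    exact ENNReal.ofReal_le_ofReal
      ((abs_sub_add_klFun_midpoint_le hfx hgx ht).trans_eq (by ring))
  have hintegral := lintegral_mono_ae hpointwise
  rwa [lintegral_add_left (by fun_prop), lintegral_const_mul _ (by fun_prop),
    lintegral_add_left (by fun_prop), lintegral_const_mul _ (by fun_prop),
    lintegral_const_mul _ (by fun_prop), lintegral_add_left (by fun_prop),
    lintegral_add_left (by fun_prop), ← enorm_L1_eq_lintegral_enorm,
    ← enorm_L1_eq_lintegral_enorm, ← enorm_L1_eq_lintegral_enorm]
    at hintegral

lemma dist_le_of_densityEntropy_le {C : Set (α →₁[ρ] ℝ)} (hconv : Convex ℝ C)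
    (hnonneg : ∀ f ∈ C, 0 ≤ f) {R : ℝ} (hR : ∀ f ∈ C, ‖f‖ ≤ R) {ε t : ℝ} (hε : 0 ≤ ε) (ht : 0 < t)
    (hfin : sInf (densityEntropy '' C) ≠ ∞) {f g : α →₁[ρ] ℝ} (hf : f ∈ C) (hg : g ∈ C)
    (hfε : densityEntropy f ≤ sInf (densityEntropy '' C) + ENNReal.ofReal ε)
    (hgε : densityEntropy g ≤ sInf (densityEntropy '' C) + ENNReal.ofReal ε) :
    dist f g ≤ 2 * t * ε + 2 * R / t := by
  set m := sInf (densityEntropy '' C)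
  have hR0 : 0 ≤ R := (norm_nonneg f).trans (hR f hf)
  have enorm_le : ∀ h ∈ C, ‖h‖ₑ ≤ ENNReal.ofReal R := fun h hh => by
    rw [← ofReal_norm]; exact ENNReal.ofReal_le_ofReal (hR h hh)
  have hmid : m ≤ densityEntropy (midpoint ℝ f g) :=
    sInf_le (Set.mem_image_of_mem _ (hconv.midpoint_mem hf hg))
  have hle : ‖f - g‖ₑ + ENNReal.ofReal (2 * t) * m
      ≤ ENNReal.ofReal (2 * t * ε + 2 * R / t) + ENNReal.ofReal (2 * t) * m :=
    calc ‖f - g‖ₑ + ENNReal.ofReal (2 * t) * m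
        ≤ ‖f - g‖ₑ + ENNReal.ofReal (2 * t) * densityEntropy (midpoint ℝ f g) := by gcongr
      _ ≤ ENNReal.ofReal t * (densityEntropy f + densityEntropy g)
          + ENNReal.ofReal (1 / t) * (‖f‖ₑ + ‖g‖ₑ) :=
        enorm_sub_add_densityEntropy_midpoint_le (hnonneg f hf) (hnonneg g hg) ht
      _ ≤ ENNReal.ofReal t * ((m + ENNReal.ofReal ε) + (m + ENNReal.ofReal ε))
          + ENNReal.ofReal (1 / t) * (ENNReal.ofReal R + ENNReal.ofReal R) := by
        gcongr <;> exact enorm_le _ ‹_›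
      _ = ENNReal.ofReal (2 * t * ε + 2 * R / t) + ENNReal.ofReal (2 * t) * m := by
        rw [ENNReal.ofReal_add (by positivity) (by positivity), mul_div_assoc, div_eq_inv_mul R,
          one_div, ENNReal.ofReal_mul (by positivity : (0 : ℝ) ≤ 2 * t),
          ENNReal.ofReal_mul zero_le_two, ENNReal.ofReal_mul zero_le_two,
          ENNReal.ofReal_mul (inv_nonneg.2 ht.le), ENNReal.ofReal_ofNat]
        ring
  rw [dist_eq_norm, ← ENNReal.ofReal_le_ofReal_iff (by positivity), ofReal_norm]
  exact (ENNReal.add_le_add_iff_right (ENNReal.mul_ne_top ENNReal.ofReal_ne_top hfin)).1 hle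

theorem existsUnique_isMinOn_densityEntropy {C : Set (α →₁[ρ] ℝ)} (hclosed : IsClosed C)
    (hconv : Convex ℝ C) (hnonneg : ∀ f ∈ C, 0 ≤ f) (hbdd : Bornology.IsBounded C)
    (hfin : ∃ f ∈ C, densityEntropy f ≠ ∞) :
    ∃! f, f ∈ C ∧ IsMinOn densityEntropy C f := by
  obtain ⟨f₀, hf₀C, hf₀⟩ := hfin
  obtain ⟨R, hR0, hR⟩ := hbdd.exists_pos_norm_le
  have hinf : sInf (densityEntropy '' C) ≠ ∞ :=
    ne_top_of_le_ne_top hf₀ (sInf_le (Set.mem_image_of_mem _ hf₀C))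
  refine existsUnique_isMinOn_of_dist_le hclosed ⟨f₀, hf₀C⟩ lowerSemicontinuous_densityEntropy
    fun η hη => ?_
  set t := 2 * (1 + R) / η with ht_def
  have ht : 0 < t := by positivity
  refine ⟨sInf (densityEntropy '' C) + ENNReal.ofReal (1 / t ^ 2),
    ENNReal.lt_add_right hinf (by positivity), fun f hf g hg hfε hgε => ?_⟩
  calc dist f g ≤ 2 * t * (1 / t ^ 2) + 2 * R / t :=
        dist_le_of_densityEntropy_le hconv hnonneg hR (by positivity) ht hinf hf hg hfε hgε
    _ = η := by rw [ht_def]; field_simp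

end EntropyOfDensities

section InformationProjection

open InformationTheory
open scoped NNReal

variable {α : Type*} [MeasurableSpace α] {ρ : Measure α}

/-- The measure with density `f` with respect to `ρ`; it is meant for `0 ≤ f`, the negative part
of `f` being ignored. -/
noncomputable def measureOfDensity (f : α →₁[ρ] ℝ) : Measure α :=
  ρ.withDensity fun x => ENNReal.ofReal (f x)

instance (f : α →₁[ρ] ℝ) : IsFiniteMeasure (measureOfDensity f) :=
  isFiniteMeasure_withDensity_ofReal (L1.integrable_coeFn f).2

lemma measureOfDensity_apply {f : α →₁[ρ] ℝ} (hf : 0 ≤ f) {A : Set α} (hA : MeasurableSet A) :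
    measureOfDensity f A = ENNReal.ofReal (∫ x in A, f x ∂ρ) := by
  rw [measureOfDensity, withDensity_apply _ hA,
    ofReal_integral_eq_lintegral_ofReal (L1.integrable_coeFn f).integrableOn
      (ae_restrict_of_ae ((Lp.coeFn_nonneg f).2 hf))]

lemma smul_add_smul_L1_nonneg {f g : α →₁[ρ] ℝ} (hf : 0 ≤ f) (hg : 0 ≤ g) (a b : ℝ≥0) :
    0 ≤ (a : ℝ) • f + (b : ℝ) • g := by
  have smul_nonneg_L1 {h : α →₁[ρ] ℝ} (hh : 0 ≤ h) (c : ℝ≥0) : 0 ≤ (c : ℝ) • h := by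
    refine (Lp.coeFn_nonneg _).1 ?_
    filter_upwards [Lp.coeFn_smul (c : ℝ) h, (Lp.coeFn_nonneg h).2 hh] with x hx hhx
    rw [hx]
    exact mul_nonneg c.coe_nonneg hhx
  exact add_nonneg (smul_nonneg_L1 hf a) (smul_nonneg_L1 hg b)

lemma measureOfDensity_smul_add_smul {f g : α →₁[ρ] ℝ} (hf : 0 ≤ f) (hg : 0 ≤ g) (a b : ℝ≥0) :
    measureOfDensity ((a : ℝ) • f + (b : ℝ) • g)
      = a • measureOfDensity f + b • measureOfDensity g := by
  ext A hA
  have hint : ∫ x in A, ((a : ℝ) • f + (b : ℝ) • g : α →₁[ρ] ℝ) x ∂ρ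
      = a * ∫ x in A, f x ∂ρ + b * ∫ x in A, g x ∂ρ := by
    rw [← integral_const_mul, ← integral_const_mul, ← integral_add
      ((L1.integrable_coeFn f).const_mul _).integrableOn
      ((L1.integrable_coeFn g).const_mul _).integrableOn]
    refine integral_congr_ae (ae_restrict_of_ae ?_)
    filter_upwards [Lp.coeFn_add ((a : ℝ) • f) ((b : ℝ) • g), Lp.coeFn_smul (a : ℝ) f,
      Lp.coeFn_smul (b : ℝ) g] with x hadd hfx hgx
    rw [hadd, Pi.add_apply, hfx, hgx, Pi.smul_apply, Pi.smul_apply, smul_eq_mul, smul_eq_mul]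
  have setIntegral_nonneg {h : α →₁[ρ] ℝ} (hh : 0 ≤ h) : 0 ≤ ∫ x in A, h x ∂ρ :=
    integral_nonneg_of_ae (ae_restrict_of_ae ((Lp.coeFn_nonneg h).2 hh))
  rw [measureOfDensity_apply (smul_add_smul_L1_nonneg hf hg a b) hA, hint, Measure.add_apply,
    Measure.smul_apply, Measure.smul_apply, measureOfDensity_apply hf hA,
    measureOfDensity_apply hg hA,
    ENNReal.ofReal_add (mul_nonneg a.coe_nonneg (setIntegral_nonneg hf))
      (mul_nonneg b.coe_nonneg (setIntegral_nonneg hg)),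
    ENNReal.ofReal_mul a.coe_nonneg, ENNReal.ofReal_mul b.coe_nonneg, ENNReal.ofReal_coe_nnreal,
    ENNReal.ofReal_coe_nnreal, ENNReal.smul_def, ENNReal.smul_def, smul_eq_mul, smul_eq_mul]

lemma withDensity_ofReal_toReal_rnDeriv [SigmaFinite ρ] {P : Measure α} [SigmaFinite P]
    (hP : P ≪ ρ) : ρ.withDensity (fun x => ENNReal.ofReal (P.rnDeriv ρ x).toReal) = P :=
  calc ρ.withDensity (fun x => ENNReal.ofReal (P.rnDeriv ρ x).toReal)
      = ρ.withDensity (P.rnDeriv ρ) := withDensity_congr_ae <|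
        (Measure.rnDeriv_lt_top P ρ).mono fun _ hx => ENNReal.ofReal_toReal hx.ne
    _ = P := Measure.withDensity_rnDeriv_eq P ρ hP

lemma exists_measureOfDensity_eq [SigmaFinite ρ] {P : Measure α} [IsFiniteMeasure P]
    (hP : P ≪ ρ) : ∃ f : α →₁[ρ] ℝ, 0 ≤ f ∧ measureOfDensity f = P := by
  have hint : Integrable (fun x => (P.rnDeriv ρ x).toReal) ρ := Measure.integrable_toReal_rnDeriv
  refine ⟨hint.toL1 _, (Lp.coeFn_nonneg _).1 ?_, ?_⟩
  · filter_upwards [hint.coeFn_toL1] with x hx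
    rw [hx]
    exact ENNReal.toReal_nonneg
  · refine (withDensity_congr_ae ?_).trans (withDensity_ofReal_toReal_rnDeriv hP)
    filter_upwards [hint.coeFn_toL1] with x hx
    rw [hx]

lemma klDiv_measureOfDensity [IsFiniteMeasure ρ] {f : α →₁[ρ] ℝ} (hf : 0 ≤ f) :
    klDiv (measureOfDensity f) ρ = densityEntropy f := by
  have hac : measureOfDensity f ≪ ρ := withDensity_absolutelyContinuous _ _
  have hmeas : Measurable fun x => ENNReal.ofReal (f x) :=
    (L1.stronglyMeasurable_coeFn f).measurable.ennreal_ofReal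
  rw [klDiv_eq_lintegral_klFun_of_ac hac]
  refine lintegral_congr_ae ?_
  filter_upwards [Measure.rnDeriv_withDensity ρ hmeas, (Lp.coeFn_nonneg f).2 hf] with x hx hfx
  rw [measureOfDensity, hx, ENNReal.toReal_ofReal hfx]

/-- The densities in `L¹(ρ)` of the members of `Γ` that are absolutely continuous with respect to
`ρ`. Total variation closedness of this part of `Γ` is expressed as closedness of
`densitiesOf ρ Γ` in `L¹(ρ)`. -/
def densitiesOf (ρ : Measure α) (Γ : Set (Measure α)) : Set (α →₁[ρ] ℝ) :=
  {f | 0 ≤ f ∧ measureOfDensity f ∈ Γ}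

lemma convex_densitiesOf {Γ : Set (Measure α)} (hΓ : Convex ℝ≥0 Γ) :
    Convex ℝ (densitiesOf ρ Γ) := by
  rintro f ⟨hf, hfΓ⟩ g ⟨hg, hgΓ⟩ a b ha hb hab
  lift a to ℝ≥0 using ha
  lift b to ℝ≥0 using hb
  refine ⟨smul_add_smul_L1_nonneg hf hg a b, ?_⟩
  rw [measureOfDensity_smul_add_smul hf hg]
  exact hΓ hfΓ hgΓ a.2 b.2 (by exact_mod_cast hab)

lemma norm_eq_one_of_mem_densitiesOf {Γ : Set (Measure α)}
    (hprob : ∀ P ∈ Γ, IsProbabilityMeasure P) {f : α →₁[ρ] ℝ} (hf : f ∈ densitiesOf ρ Γ) :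
    ‖f‖ = 1 := by
  have huniv := (hprob _ hf.2).measure_univ
  rw [measureOfDensity_apply hf.1 .univ, setIntegral_univ, ENNReal.ofReal_eq_one] at huniv
  rw [L1.norm_eq_integral_norm, ← huniv]
  refine integral_congr_ae ?_
  filter_upwards [(Lp.coeFn_nonneg f).2 hf.1] with x hx
  exact Real.norm_of_nonneg hx

theorem existsUnique_isMinOn_klDiv [IsFiniteMeasure ρ] {Γ : Set (Measure α)}
    (hprob : ∀ P ∈ Γ, IsProbabilityMeasure P) (hconv : Convex ℝ≥0 Γ)
    (hclosed : IsClosed (densitiesOf ρ Γ)) (hfin : ∃ P ∈ Γ, klDiv P ρ ≠ ∞) :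
    ∃! P, P ∈ Γ ∧ IsMinOn (klDiv · ρ) Γ P := by
  have exists_density : ∀ P ∈ Γ, klDiv P ρ ≠ ∞ → ∃ f ∈ densitiesOf ρ Γ,
      measureOfDensity f = P ∧ densityEntropy f = klDiv P ρ := fun P hPΓ hP => by
    have := hprob P hPΓ
    obtain ⟨f, hf, rfl⟩ := exists_measureOfDensity_eq (klDiv_ne_top_iff.1 hP).1
    exact ⟨f, ⟨hf, hPΓ⟩, rfl, (klDiv_measureOfDensity hf).symm⟩
  obtain ⟨P₀, hP₀Γ, hP₀⟩ := hfin
  obtain ⟨f₀, hf₀, -, hf₀P⟩ := exists_density P₀ hP₀Γ hP₀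
  have hbdd : Bornology.IsBounded (densitiesOf ρ Γ) :=
    isBounded_iff_forall_norm_le.2 ⟨1, fun f hf => (norm_eq_one_of_mem_densitiesOf hprob hf).le⟩
  obtain ⟨f, ⟨hf, hfmin⟩, hfuniq⟩ := existsUnique_isMinOn_densityEntropy hclosed
    (convex_densitiesOf hconv) (fun _ hf => hf.1) hbdd ⟨f₀, hf₀, hf₀P ▸ hP₀⟩
  have hPmin : IsMinOn (klDiv · ρ) Γ (measureOfDensity f) := fun P hPΓ => by
    by_cases hP : klDiv P ρ = ∞
    · simp only [Set.mem_ofPred_eq, hP, le_top]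
    · obtain ⟨g, hg, -, hgP⟩ := exists_density P hPΓ hP
      simpa only [Set.mem_ofPred_eq, klDiv_measureOfDensity hf.1, ← hgP] using hfmin hg
  refine ⟨measureOfDensity f, ⟨hf.2, hPmin⟩, fun P ⟨hPΓ, hP⟩ => ?_⟩
  obtain ⟨g, hg, rfl, hgP⟩ := exists_density P hPΓ (ne_top_of_le_ne_top hP₀ (hP hP₀Γ))
  rw [hfuniq g ⟨hg, fun h hh => ?_⟩]
  simpa only [Set.mem_ofPred_eq, hgP, klDiv_measureOfDensity hh.1] using hP hh.2

end InformationProjection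

section PrescribedMarginals

open scoped NNReal

variable {α ι : Type*} {β : ι → Type*} [MeasurableSpace α] [∀ i, MeasurableSpace (β i)]
  {e : ∀ i, α → β i} {S : Set ι} {μ : ∀ i, Measure (β i)}

/-- The probability measures whose image under `e i` is `μ i` for each `i ∈ S`: the feasible set
of a Schrödinger problem with marginal constraints. -/
def marginalFamily (e : ∀ i, α → β i) (S : Set ι) (μ : ∀ i, Measure (β i)) : Set (Measure α) :=
  {P | IsProbabilityMeasure P ∧ ∀ i ∈ S, P.map (e i) = μ i}

lemma integrable_sum_comp_of_mem_marginalFamily {s : Finset ι} {E : Type*} [NormedAddCommGroup E]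
    (he : ∀ i, Measurable (e i)) {P : Measure α} (hP : P ∈ marginalFamily e s μ)
    {f : ∀ i, β i → E} (hf : ∀ i ∈ s, Integrable (f i) (μ i)) :
    Integrable (fun x => ∑ i ∈ s, f i (e i x)) P :=
  integrable_finsetSum _ fun i hi => (hP.2 i hi ▸ hf i hi).comp_measurable (he i)

lemma integral_sum_comp_of_mem_marginalFamily {s : Finset ι} {E : Type*} [NormedAddCommGroup E]
    [NormedSpace ℝ E] (he : ∀ i, Measurable (e i)) {P : Measure α}
    (hP : P ∈ marginalFamily e s μ) {f : ∀ i, β i → E} (hf : ∀ i ∈ s, Integrable (f i) (μ i)) :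
    ∫ x, ∑ i ∈ s, f i (e i x) ∂P = ∑ i ∈ s, ∫ y, f i y ∂(μ i) := by
  have hmap : ∀ i ∈ s, Integrable (f i) (P.map (e i)) := fun i hi => (hP.2 i hi).symm ▸ hf i hi
  have hcomp : ∀ i ∈ s, Integrable (fun x => f i (e i x)) P :=
    fun i hi => (hmap i hi).comp_measurable (he i)
  rw [integral_finsetSum _ hcomp]
  refine Finset.sum_congr rfl fun i hi => ?_
  rw [← hP.2 i hi, integral_map (he i).aemeasurable (hmap i hi).aestronglyMeasurable]

lemma convex_marginalFamily (he : ∀ i, Measurable (e i)) :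
    Convex ℝ≥0 (marginalFamily e S μ) := by
  rintro P ⟨hP, hPμ⟩ P' ⟨hP', hPμ'⟩ a b - - hab
  refine ⟨⟨?_⟩, fun i hi => ?_⟩
  · rw [Measure.add_apply, Measure.smul_apply, Measure.smul_apply, measure_univ, measure_univ,
      ← add_smul, hab, one_smul]
  · rw [Measure.map_add _ _ (he i), Measure.map_smul, Measure.map_smul, hPμ i hi, hPμ' i hi,
      ← add_smul, hab, one_smul]

lemma isClosed_densitiesOf_marginalFamily {ρ : Measure α} (he : ∀ i, Measurable (e i)) :
    IsClosed (densitiesOf ρ (marginalFamily e S μ)) := by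
  have eq_inter : densitiesOf ρ (marginalFamily e S μ) = {f | 0 ≤ f} ∩
      ({f | ENNReal.ofReal (∫ x in Set.univ, f x ∂ρ) = 1} ∩ ⋂ i ∈ S, ⋂ B, ⋂ (_ : MeasurableSet B),
        {f | ENNReal.ofReal (∫ x in e i ⁻¹' B, f x ∂ρ) = μ i B}) := by
    ext f
    simp only [densitiesOf, marginalFamily, isProbabilityMeasure_iff, Set.mem_ofPred_eq,
      Set.mem_inter_iff, Set.mem_iInter]
    refine and_congr_right fun hf => and_congr ?_ (forall₂_congr fun i _ => ?_)
    · rw [measureOfDensity_apply hf .univ]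
    · rw [Measure.ext_iff]
      refine forall₂_congr fun B hB => ?_
      rw [Measure.map_apply (he i) hB, measureOfDensity_apply hf (he i hB)]
  have isClosed_eq_const (A : Set α) (c : ℝ≥0∞) :
      IsClosed {f : α →₁[ρ] ℝ | ENNReal.ofReal (∫ x in A, f x ∂ρ) = c} :=
    isClosed_singleton.preimage (ENNReal.continuous_ofReal.comp (continuous_setIntegral A))
  rw [eq_inter]
  exact isClosed_Ici.inter <| (isClosed_eq_const _ _).inter <| isClosed_biInter fun i _ =>
    isClosed_iInter fun B => isClosed_iInter fun _ => isClosed_eq_const _ _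

end PrescribedMarginals

section KLDivergence

open InformationTheory Real
open scoped NNReal

variable {α : Type*} [MeasurableSpace α] {P Q ν : Measure α}

lemma KL_ne_top_iff : KL P Q ≠ ⊤ ↔ P ≪ Q ∧ Integrable (llr P Q) P := by
  unfold KL
  split_ifs with h <;> simp [h]

lemma KL_withDensity_right_ne_top [SigmaFinite P] [SigmaFinite ν] {q : α → ℝ}
    (hq : Measurable q) (hq_pos : ∀ x, 0 < q x) (hlog : Integrable (fun x => log (q x)) P)
    (hP : KL P ν ≠ ⊤) : KL P (ν.withDensity fun x => ENNReal.ofReal (q x)) ≠ ⊤ := by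
  obtain ⟨hac, hint⟩ := KL_ne_top_iff.1 hP
  have hq_ne : ∀ᵐ x ∂ν, ENNReal.ofReal (q x) ≠ 0 :=
    ae_of_all _ fun x => (ENNReal.ofReal_pos.2 (hq_pos x)).ne'
  refine KL_ne_top_iff.2 ⟨hac.trans (withDensity_absolutelyContinuous'
    hq.ennreal_ofReal.aemeasurable hq_ne), (hint.sub hlog).congr ?_⟩
  filter_upwards [hac.ae_le (Measure.rnDeriv_withDensity_right P ν hq.ennreal_ofReal.aemeasurable
    hq_ne (ae_of_all _ fun _ => ENNReal.ofReal_ne_top)), Measure.rnDeriv_pos hac,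
    hac.ae_le (Measure.rnDeriv_lt_top P ν)] with x hx hpos htop
  rw [Pi.sub_apply, llr, llr, hx, ENNReal.toReal_mul, ENNReal.toReal_inv,
    ENNReal.toReal_ofReal (hq_pos x).le, log_mul (inv_ne_zero (hq_pos x).ne')
      (ENNReal.toReal_pos hpos.ne' htop.ne).ne', log_inv]
  ring

lemma ae_withDensity_ofReal_pos {p : α → ℝ} (hp : Measurable p) :
    ∀ᵐ x ∂(ν.withDensity fun x => ENNReal.ofReal (p x)), 0 < p x :=
  (ae_withDensity_iff hp.ennreal_ofReal).2 <|
    ae_of_all _ fun _ hx => ENNReal.ofReal_pos.1 (pos_iff_ne_zero.2 hx)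

lemma KL_withDensity_left_ne_top [SigmaFinite ν] {p : α → ℝ} (hp : Measurable p)
    (hlog : Integrable (fun x => log (p x)) (ν.withDensity fun x => ENNReal.ofReal (p x))) :
    KL (ν.withDensity fun x => ENNReal.ofReal (p x)) ν ≠ ⊤ := by
  have hac : ν.withDensity (fun x => ENNReal.ofReal (p x)) ≪ ν :=
    withDensity_absolutelyContinuous _ _
  refine KL_ne_top_iff.2 ⟨hac, hlog.congr ?_⟩
  filter_upwards [hac.ae_le (Measure.rnDeriv_withDensity ν hp.ennreal_ofReal),
    ae_withDensity_ofReal_pos hp] with x hx hpos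
  rw [llr, hx, ENNReal.toReal_ofReal hpos.le]

lemma klDiv_tilted_ne_top_iff [IsProbabilityMeasure P] [SigmaFinite Q] {φ : α → ℝ}
    (hφQ : Integrable (fun x => exp (φ x)) Q) (hφP : Integrable φ P) :
    klDiv P (Q.tilted φ) ≠ ∞ ↔ KL P Q ≠ ⊤ := by
  have hac : P ≪ Q.tilted φ ↔ P ≪ Q :=
    ⟨fun h => h.trans (tilted_absolutelyContinuous _ _),
      fun h => h.trans (absolutelyContinuous_tilted hφQ)⟩
  rw [klDiv_ne_top_iff, KL_ne_top_iff, hac]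
  refine and_congr_right fun h => ⟨fun hint => ?_, fun hint =>
    integrable_llr_tilted_right h hφP hint hφQ⟩
  refine ((hint.add hφP).sub (integrable_const (log (∫ x, exp (φ x) ∂Q)))).congr ?_
  filter_upwards [llr_tilted_right h hφQ] with x hx
  rw [Pi.sub_apply, Pi.add_apply, hx]
  ring

lemma KL_eq_klDiv_tilted_add [IsProbabilityMeasure P] [SigmaFinite Q] [NeZero Q] {φ : α → ℝ}
    (hφQ : Integrable (fun x => exp (φ x)) Q) (hφP : Integrable φ P) :
    KL P Q = (klDiv P (Q.tilted φ) : EReal)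
      + ((∫ x, φ x ∂P - log (∫ x, exp (φ x) ∂Q) : ℝ) : EReal) := by
  have := isProbabilityMeasure_tilted hφQ
  by_cases hfin : KL P Q = ⊤
  · have htop : klDiv P (Q.tilted φ) = ∞ :=
      not_not.1 fun h => (klDiv_tilted_ne_top_iff hφQ hφP).1 h hfin
    rw [hfin, htop, EReal.coe_ennreal_top, EReal.top_add_coe]
  · obtain ⟨hac, hint⟩ := KL_ne_top_iff.1 hfin
    have hkl := (klDiv_tilted_ne_top_iff hφQ hφP).2 hfin
    obtain ⟨hac', hint'⟩ := klDiv_ne_top_iff.1 hkl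
    rw [KL, if_pos ⟨hac, hint⟩, ← EReal.coe_ennreal_toReal hkl, toReal_klDiv hac' hint',
      integral_llr_tilted_right hac hφP hφQ hint, ← EReal.coe_add, probReal_univ, probReal_univ]
    congr 1
    ring

theorem existsUnique_isMinOn_KL [SigmaFinite Q] {φ : α → ℝ}
    (hφQ : Integrable (fun x => exp (φ x)) Q) {Γ : Set (Measure α)}
    (hprob : ∀ P ∈ Γ, IsProbabilityMeasure P) {c : ℝ}
    (hφ : ∀ P ∈ Γ, Integrable φ P ∧ ∫ x, φ x ∂P = c) (hconv : Convex ℝ≥0 Γ)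
    (hclosed : IsClosed (densitiesOf (Q.tilted φ) Γ)) (hfin : ∃ P ∈ Γ, KL P Q ≠ ⊤) :
    ∃! P, P ∈ Γ ∧ IsMinOn (KL · Q) Γ P := by
  obtain ⟨P₀, hP₀Γ, hP₀⟩ := hfin
  have := hprob P₀ hP₀Γ
  have : NeZero Q := ⟨fun hQ => IsProbabilityMeasure.ne_zero P₀ <|
    Measure.absolutelyContinuous_zero_iff.1 (hQ ▸ (KL_ne_top_iff.1 hP₀).1)⟩
  have := isProbabilityMeasure_tilted hφQ
  have hKL : ∀ P ∈ Γ, KL P Q = (klDiv P (Q.tilted φ) : EReal)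
      + ((c - log (∫ x, exp (φ x) ∂Q) : ℝ) : EReal) := fun P hP => by
    have := hprob P hP
    rw [KL_eq_klDiv_tilted_add hφQ (hφ P hP).1, (hφ P hP).2]
  have isMinOn_iff_klDiv : ∀ P ∈ Γ,
      (IsMinOn (KL · Q) Γ P ↔ IsMinOn (klDiv · (Q.tilted φ)) Γ P) := fun P hP => by
    refine forall₂_congr fun P' hP' => ?_
    simp only [Set.mem_ofPred_eq, hKL P hP, hKL P' hP',
      (EReal.addLECancellable_coe _).add_le_add_iff_right, EReal.coe_ennreal_le_coe_ennreal_iff]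
  refine (existsUnique_congr fun P => and_congr_right (isMinOn_iff_klDiv P)).2
    (existsUnique_isMinOn_klDiv hprob hconv hclosed ⟨P₀, hP₀Γ, ?_⟩)
  exact (klDiv_tilted_ne_top_iff hφQ (hφ P₀ hP₀Γ).1).2 hP₀

end KLDivergence

section ProductMeasures

open Real

variable {ι : Type*} [Fintype ι] {E : ι → Type*} [∀ i, MeasurableSpace (E i)]
  {ν : ∀ i, Measure (E i)} [∀ i, SigmaFinite (ν i)]

lemma pi_withDensity_ofReal {g : ∀ i, E i → ℝ} (hg : ∀ i, Integrable (g i) (ν i))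
    (hg_nonneg : ∀ i y, 0 ≤ g i y) :
    Measure.pi (fun i => (ν i).withDensity fun y => ENNReal.ofReal (g i y))
      = (Measure.pi ν).withDensity fun x => ENNReal.ofReal (∏ i, g i (x i)) := by
  refine Measure.pi_eq fun s hs => ?_
  rw [withDensity_apply _ (.univ_pi hs), Measure.restrict_pi_pi,
    ← ofReal_integral_eq_lintegral_ofReal
      (Integrable.fintype_prod_dep fun i => (hg i).integrableOn)
      (ae_of_all _ fun x => Finset.prod_nonneg fun i _ => hg_nonneg i (x i)),
    integral_fintype_prod_eq_prod,
    ENNReal.ofReal_prod_of_nonneg fun i _ => integral_nonneg (hg_nonneg i)]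
  refine Finset.prod_congr rfl fun i _ => ?_
  rw [withDensity_apply _ (hs i), ofReal_integral_eq_lintegral_ofReal (hg i).integrableOn
    (ae_of_all _ (hg_nonneg i))]

lemma KL_pi_ne_top {μ : ∀ i, Measure (E i)} [∀ i, IsProbabilityMeasure (μ i)]
    (hμ : ∀ i, KL (μ i) (ν i) ≠ ⊤) : KL (Measure.pi μ) (Measure.pi ν) ≠ ⊤ := by
  set g : ∀ i, E i → ℝ := fun i y => ((μ i).rnDeriv (ν i) y).toReal
  have hg : ∀ i, Integrable (g i) (ν i) := fun i => Measure.integrable_toReal_rnDeriv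
  have pi_eq : Measure.pi μ
      = (Measure.pi ν).withDensity fun x => ENNReal.ofReal (∏ i, g i (x i)) := by
    rw [← pi_withDensity_ofReal hg fun _ _ => ENNReal.toReal_nonneg]
    congr with i : 1
    exact (withDensity_ofReal_toReal_rnDeriv (KL_ne_top_iff.1 (hμ i)).1).symm
  have integrable_sum_llr : Integrable (fun x => ∑ i, llr (μ i) (ν i) (x i)) (Measure.pi μ) :=
    integrable_finsetSum _ fun i _ =>
      (measurePreserving_eval μ i).integrable_comp_of_integrable (KL_ne_top_iff.1 (hμ i)).2
  have hprod : Measurable fun x : ∀ i, E i => ∏ i, g i (x i) := by fun_prop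
  rw [pi_eq] at integrable_sum_llr ⊢
  refine KL_withDensity_left_ne_top hprod (integrable_sum_llr.congr ?_)
  filter_upwards [ae_withDensity_ofReal_pos hprod] with x hx
  rw [log_prod fun i hi => Finset.prod_ne_zero_iff.1 hx.ne' i hi]
  rfl

end ProductMeasures

section GraphEnergy

open Real

variable {V : Type*} {d : ℕ}

lemma sqDist_mk (x : V → EuclideanSpace ℝ (Fin d)) (u v : V) :
    sqDist x s(u, v) = ‖x u - x v‖ ^ 2 := rfl

lemma sqDist_nonneg (x : V → EuclideanSpace ℝ (Fin d)) (e : Sym2 V) : 0 ≤ sqDist x e := by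
  induction e with | _ u v => exact sq_nonneg _

@[fun_prop]
lemma continuous_sqDist (e : Sym2 V) :
    Continuous fun x : V → EuclideanSpace ℝ (Fin d) => sqDist x e := by
  induction e with | _ u v => simp only [sqDist_mk]; fun_prop

lemma norm_sub_sq_le_two_mul {E : Type*} [SeminormedAddCommGroup E] (a b : E) :
    ‖a - b‖ ^ 2 ≤ 2 * ‖a‖ ^ 2 + 2 * ‖b‖ ^ 2 := by
  nlinarith [norm_sub_le a b, norm_nonneg (a - b), sq_nonneg (‖a‖ - ‖b‖)]

lemma integrable_sqDist {P : Measure (V → EuclideanSpace ℝ (Fin d))}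
    (hP : ∀ v, Integrable (fun x => ‖x v‖ ^ 2) P) (e : Sym2 V) :
    Integrable (fun x => sqDist x e) P := by
  induction e with | _ u v =>
  refine (((hP u).const_mul 2).add ((hP v).const_mul 2)).mono'
    (by simp only [sqDist_mk]; fun_prop) (ae_of_all _ fun x => ?_)
  rw [norm_of_nonneg (sqDist_nonneg x _)]
  exact norm_sub_sq_le_two_mul (x u) (x v)

variable {G : SimpleGraph V} [Fintype G.edgeSet] {c : Sym2 V → ℝ}

/-- The weighted Dirichlet energy `∑ ‖x u - x v‖² / c {u, v}` over the edges `{u, v}` of `G`; the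
Brownian reference density is a constant times `exp (-graphEnergy G c x)` for a suitable `c`. -/
noncomputable def graphEnergy (G : SimpleGraph V) [Fintype G.edgeSet] (c : Sym2 V → ℝ)
    (x : V → EuclideanSpace ℝ (Fin d)) : ℝ :=
  ∑ e ∈ G.edgeFinset, sqDist x e / c e

@[fun_prop]
lemma continuous_graphEnergy :
    Continuous (graphEnergy G c : (V → EuclideanSpace ℝ (Fin d)) → ℝ) := by
  unfold graphEnergy
  fun_prop

lemma integrable_graphEnergy {P : Measure (V → EuclideanSpace ℝ (Fin d))}
    (hP : ∀ v, Integrable (fun x => ‖x v‖ ^ 2) P) : Integrable (graphEnergy G c) P :=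
  integrable_finsetSum _ fun e _ => (integrable_sqDist hP e).div_const _

lemma graphEnergy_nonneg (hc : ∀ e ∈ G.edgeFinset, 0 < c e)
    (x : V → EuclideanSpace ℝ (Fin d)) : 0 ≤ graphEnergy G c x :=
  Finset.sum_nonneg fun e he => div_nonneg (sqDist_nonneg x e) (hc e he).le

lemma sqDist_le_mul_graphEnergy (hc : ∀ e ∈ G.edgeFinset, 0 < c e)
    (x : V → EuclideanSpace ℝ (Fin d)) {e : Sym2 V} (he : e ∈ G.edgeFinset) :
    sqDist x e ≤ c e * graphEnergy G c x := by
  rw [← div_le_iff₀' (hc e he)]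
  exact Finset.single_le_sum (f := fun e => sqDist x e / c e)
    (fun e he => div_nonneg (sqDist_nonneg x e) (hc e he).le) he

lemma exists_norm_sq_le_of_reachable (hc : ∀ e ∈ G.edgeFinset, 0 < c e) {i v : V}
    (h : G.Reachable i v) : ∃ C : ℝ, 0 ≤ C ∧ ∀ x : V → EuclideanSpace ℝ (Fin d),
      ‖x v‖ ^ 2 ≤ C * (‖x i‖ ^ 2 + graphEnergy G c x) := by
  rw [SimpleGraph.reachable_iff_reflTransGen] at h
  induction h with
  | refl =>
    refine ⟨1, zero_le_one, fun x => ?_⟩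
    rw [one_mul]
    exact le_add_of_nonneg_right (graphEnergy_nonneg hc x)
  | @tail u v _ huv ih =>
    obtain ⟨C, hC, hu⟩ := ih
    have he : s(u, v) ∈ G.edgeFinset := SimpleGraph.mem_edgeFinset.2 huv
    refine ⟨2 * C + 2 * c s(u, v), by have := hc _ he; positivity, fun x => ?_⟩
    have hedge : ‖x u - x v‖ ^ 2 ≤ c s(u, v) * (‖x i‖ ^ 2 + graphEnergy G c x) :=
      (sqDist_le_mul_graphEnergy hc x he).trans <| mul_le_mul_of_nonneg_left
        (le_add_of_nonneg_left (sq_nonneg _)) (hc _ he).le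
    calc ‖x v‖ ^ 2 = ‖x u - (x u - x v)‖ ^ 2 := by rw [sub_sub_cancel]
      _ ≤ 2 * ‖x u‖ ^ 2 + 2 * ‖x u - x v‖ ^ 2 := norm_sub_sq_le_two_mul _ _
      _ ≤ (2 * C + 2 * c s(u, v)) * (‖x i‖ ^ 2 + graphEnergy G c x) := by
        linear_combination 2 * hu x + 2 * hedge

lemma exists_sum_norm_sq_le [Fintype V] (hc : ∀ e ∈ G.edgeFinset, 0 < c e) {S : Finset V}
    (hS : ∀ v, ∃ i ∈ S, G.Reachable i v) :
    ∃ C : ℝ, 0 < C ∧ ∀ x : V → EuclideanSpace ℝ (Fin d),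
      ∑ v, ‖x v‖ ^ 2 ≤ C * (∑ i ∈ S, ‖x i‖ ^ 2 + graphEnergy G c x) := by
  have norm_sq_le : ∀ v, ∃ C : ℝ, 0 ≤ C ∧ ∀ x : V → EuclideanSpace ℝ (Fin d),
      ‖x v‖ ^ 2 ≤ C * (∑ i ∈ S, ‖x i‖ ^ 2 + graphEnergy G c x) := fun v => by
    obtain ⟨i, hi, hiv⟩ := hS v
    obtain ⟨C, hC, hv⟩ := exists_norm_sq_le_of_reachable (d := d) hc hiv
    refine ⟨C, hC, fun x => (hv x).trans ?_⟩
    gcongr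
    exact Finset.single_le_sum (f := fun i => ‖x i‖ ^ 2) (fun _ _ => sq_nonneg _) hi
  choose C hC hle using norm_sq_le
  refine ⟨1 + ∑ v, C v, add_pos_of_pos_of_nonneg one_pos (Finset.sum_nonneg fun v _ => hC v),
    fun x => ?_⟩
  have hB : 0 ≤ ∑ i ∈ S, ‖x i‖ ^ 2 + graphEnergy G c x :=
    add_nonneg (Finset.sum_nonneg fun _ _ => sq_nonneg _) (graphEnergy_nonneg hc x)
  calc ∑ v, ‖x v‖ ^ 2 ≤ ∑ v, C v * (∑ i ∈ S, ‖x i‖ ^ 2 + graphEnergy G c x) :=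
        Finset.sum_le_sum fun v _ => hle v x
    _ = (∑ v, C v) * (∑ i ∈ S, ‖x i‖ ^ 2 + graphEnergy G c x) := (Finset.sum_mul ..).symm
    _ ≤ (1 + ∑ v, C v) * (∑ i ∈ S, ‖x i‖ ^ 2 + graphEnergy G c x) := by
        gcongr
        exact le_add_of_nonneg_left zero_le_one

lemma integrable_exp_neg_mul_norm_sq {E : Type*} [NormedAddCommGroup E] [InnerProductSpace ℝ E]
    [FiniteDimensional ℝ E] [MeasurableSpace E] [BorelSpace E] {k : ℝ} (hk : 0 < k) :
    Integrable fun y : E => exp (-(k * ‖y‖ ^ 2)) := by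
  have hcexp := (GaussianFourier.integrable_cexp_neg_mul_sq_norm_add (b := (k : ℂ))
    (by rwa [Complex.ofReal_re]) 0 (0 : E)).norm
  refine hcexp.congr (ae_of_all _ fun y => ?_)
  simp [Complex.norm_exp, ← Complex.ofReal_pow]

lemma integrable_exp_neg_mul_sum_norm_sq {ι : Type*} [Fintype ι] {E : ι → Type*}
    [∀ i, NormedAddCommGroup (E i)] [∀ i, InnerProductSpace ℝ (E i)]
    [∀ i, FiniteDimensional ℝ (E i)] [∀ i, MeasurableSpace (E i)] [∀ i, BorelSpace (E i)]
    {k : ℝ} (hk : 0 < k) :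
    Integrable fun x : ∀ i, E i => exp (-(k * ∑ i, ‖x i‖ ^ 2)) := by
  have hprod : Integrable (fun x : ∀ i, E i => ∏ i, exp (-(k * ‖x i‖ ^ 2))) :=
    Integrable.fintype_prod_dep fun _ => integrable_exp_neg_mul_norm_sq hk
  refine hprod.congr (ae_of_all _ fun x => ?_)
  simp only [← exp_sum, Finset.mul_sum, Finset.sum_neg_distrib]

lemma integrable_exp_neg_sum_norm_sq_add_graphEnergy [Fintype V]
    (hc : ∀ e ∈ G.edgeFinset, 0 < c e) {S : Finset V} (hS : ∀ v, ∃ i ∈ S, G.Reachable i v) :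
    Integrable fun x : V → EuclideanSpace ℝ (Fin d) =>
      exp (-(∑ i ∈ S, ‖x i‖ ^ 2 + graphEnergy G c x)) := by
  obtain ⟨C, hC, hle⟩ := exists_sum_norm_sq_le (d := d) hc hS
  refine (integrable_exp_neg_mul_sum_norm_sq (inv_pos.2 hC)).mono'
    (by fun_prop) (ae_of_all _ fun x => ?_)
  rw [norm_of_nonneg (exp_pos _).le, exp_le_exp, neg_le_neg_iff, inv_mul_le_iff₀ hC]
  exact hle x

end GraphEnergy

section SchrodingerBridge

open Real

variable {V : Type*} {d : ℕ} {G : SimpleGraph V} [Fintype G.edgeSet] {T : Sym2 V → ℝ} {σ : ℝ}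

/-- The product over the edges `e` of `G` of the heat kernels of variance `σ² T e`. When `G` is a
tree, it is the joint density at the vertices of a `G`-indexed Brownian motion started from Lebesgue
measure. -/
noncomputable def brownianDensity (G : SimpleGraph V) [Fintype G.edgeSet] (T : Sym2 V → ℝ) (σ : ℝ)
    (x : V → EuclideanSpace ℝ (Fin d)) : ℝ :=
  ∏ e ∈ G.edgeFinset,
    (2 * π * σ ^ 2 * T e) ^ (-(d : ℝ) / 2) * exp (-(sqDist x e) / (2 * σ ^ 2 * T e))

/-- The normalizing constant of `brownianDensity` in front of `exp (-graphEnergy …)`. -/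
noncomputable def brownianConst (G : SimpleGraph V) [Fintype G.edgeSet] (T : Sym2 V → ℝ) (σ : ℝ)
    (d : ℕ) : ℝ :=
  ∏ e ∈ G.edgeFinset, (2 * π * σ ^ 2 * T e) ^ (-(d : ℝ) / 2)

lemma brownianConst_pos (hT : ∀ e ∈ G.edgeFinset, 0 < T e) (hσ : σ ≠ 0) :
    0 < brownianConst G T σ d :=
  Finset.prod_pos fun e he => by have := hT e he; positivity

lemma brownianDensity_eq (x : V → EuclideanSpace ℝ (Fin d)) :
    brownianDensity G T σ x
      = brownianConst G T σ d * exp (-graphEnergy G (fun e => 2 * σ ^ 2 * T e) x) := by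
  simp only [brownianDensity, brownianConst, graphEnergy, Finset.prod_mul_distrib, ← exp_sum,
    neg_div, Finset.sum_neg_distrib]

lemma brownianDensity_pos (hT : ∀ e ∈ G.edgeFinset, 0 < T e) (hσ : σ ≠ 0)
    (x : V → EuclideanSpace ℝ (Fin d)) : 0 < brownianDensity G T σ x := by
  rw [brownianDensity_eq]
  exact mul_pos (brownianConst_pos hT hσ) (exp_pos _)

lemma integrable_log_brownianDensity (hT : ∀ e ∈ G.edgeFinset, 0 < T e) (hσ : σ ≠ 0)
    {P : Measure (V → EuclideanSpace ℝ (Fin d))} [IsFiniteMeasure P]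
    (hP : ∀ v, Integrable (fun x => ‖x v‖ ^ 2) P) :
    Integrable (fun x => log (brownianDensity G T σ x)) P := by
  simp only [brownianDensity_eq, log_mul (brownianConst_pos hT hσ).ne' (exp_ne_zero _), log_exp]
  exact (integrable_const _).add (integrable_graphEnergy hP).neg

lemma continuous_brownianDensity :
    Continuous (brownianDensity G T σ : (V → EuclideanSpace ℝ (Fin d)) → ℝ) := by
  unfold brownianDensity
  fun_prop

/-- The reference measure `Q` of the Schrödinger problem, with density `brownianDensity` with
respect to Lebesgue measure; in general it is only σ-finite. -/
noncomputable def brownianReference (G : SimpleGraph V) [Fintype V] [Fintype G.edgeSet]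
    (T : Sym2 V → ℝ) (σ : ℝ) (d : ℕ) : Measure (V → EuclideanSpace ℝ (Fin d)) :=
  volume.withDensity fun x => ENNReal.ofReal (brownianDensity G T σ x)

variable [Fintype V]

instance : SigmaFinite (brownianReference G T σ d) :=
  SigmaFinite.withDensity_ofReal _

lemma integrable_exp_neg_sum_norm_sq_brownianReference (hT : ∀ e ∈ G.edgeFinset, 0 < T e)
    (hσ : σ ≠ 0) {S : Finset V} (hS : ∀ v, ∃ i ∈ S, G.Reachable i v) :
    Integrable (fun x => exp (-∑ i ∈ S, ‖x i‖ ^ 2)) (brownianReference G T σ d) := by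
  have hc : ∀ e ∈ G.edgeFinset, 0 < 2 * σ ^ 2 * T e := fun e he => by
    have := hT e he; positivity
  rw [brownianReference, integrable_withDensity_iff_integrable_smul'
    continuous_brownianDensity.measurable.ennreal_ofReal
    (ae_of_all _ fun _ => ENNReal.ofReal_lt_top)]
  refine ((integrable_exp_neg_sum_norm_sq_add_graphEnergy hc hS).const_mul
    (brownianConst G T σ d)).congr (ae_of_all _ fun x => ?_)
  beta_reduce
  rw [ENNReal.toReal_ofReal (brownianDensity_pos hT hσ x).le, brownianDensity_eq, smul_eq_mul,
    neg_add, exp_add]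
  ring

variable {S : Finset V} {μ : V → Measure (EuclideanSpace ℝ (Fin d))}

lemma exists_mem_marginalFamily_KL_ne_top (hT : ∀ e ∈ G.edgeFinset, 0 < T e) (hσ : σ ≠ 0)
    {r : V → V} (hrS : ∀ v, r v ∈ S) (hr : ∀ i ∈ S, r i = i)
    (hμ : ∀ i ∈ S, IsProbabilityMeasure (μ i)) (hKL : ∀ i ∈ S, KL (μ i) volume ≠ ⊤)
    (hmom : ∀ i ∈ S, Integrable (fun y => ‖y‖ ^ 2) (μ i)) :
    ∃ P ∈ marginalFamily (fun i (x : V → EuclideanSpace ℝ (Fin d)) => x i) S μ,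
      KL P (brownianReference G T σ d) ≠ ⊤ := by
  have (v : V) : IsProbabilityMeasure (μ (r v)) := hμ _ (hrS v)
  have heval (v : V) := measurePreserving_eval (fun v => μ (r v)) v
  refine ⟨Measure.pi fun v => μ (r v), ⟨inferInstance, fun i hi => ?_⟩, ?_⟩
  · exact (heval i).map_eq.trans (congrArg μ (hr i hi))
  · exact KL_withDensity_right_ne_top continuous_brownianDensity.measurable
      (brownianDensity_pos hT hσ) (integrable_log_brownianDensity hT hσ fun v =>
        (heval v).integrable_comp_of_integrable (hmom _ (hrS v)))
      (KL_pi_ne_top fun v => hKL _ (hrS v))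

theorem static_treeSB_exists_unique_general (hT : ∀ e ∈ G.edgeFinset, 0 < T e) (hσ : σ ≠ 0)
    (hS : ∀ v, ∃ i ∈ S, G.Reachable i v) (hμ : ∀ i ∈ S, IsProbabilityMeasure (μ i))
    (hKL : ∀ i ∈ S, KL (μ i) volume ≠ ⊤)
    (hmom : ∀ i ∈ S, Integrable (fun y => ‖y‖ ^ 2) (μ i)) :
    ∃ P ∈ marginalFamily (fun i (x : V → EuclideanSpace ℝ (Fin d)) => x i) S μ,
      KL P (brownianReference G T σ d) ≠ ⊤ ∧
      IsMinOn (KL · (brownianReference G T σ d)) (marginalFamily (fun i x => x i) S μ) P ∧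
      ∀ P' ∈ marginalFamily (fun i x => x i) S μ,
        IsMinOn (KL · (brownianReference G T σ d)) (marginalFamily (fun i x => x i) S μ) P' →
        P' = P := by
  have heval (i : V) : Measurable fun x : V → EuclideanSpace ℝ (Fin d) => x i :=
    measurable_pi_apply i
  choose s hsS hs using hS
  obtain ⟨P₀, hP₀, hfin⟩ := exists_mem_marginalFamily_KL_ne_top hT hσ
    (r := fun v => if v ∈ S then v else s v) (fun v => by split_ifs with h; exacts [h, hsS v])
    (fun i hi => if_pos hi) hμ hKL hmom
  have hφ : ∀ P ∈ marginalFamily (fun i (x : V → EuclideanSpace ℝ (Fin d)) => x i) S μ,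
      Integrable (fun x => -∑ i ∈ S, ‖x i‖ ^ 2) P ∧
      ∫ x, -∑ i ∈ S, ‖x i‖ ^ 2 ∂P = -∑ i ∈ S, ∫ y, ‖y‖ ^ 2 ∂(μ i) := fun P hP =>
    ⟨(integrable_sum_comp_of_mem_marginalFamily heval hP hmom).neg, (integral_neg _).trans
      (congrArg _ (integral_sum_comp_of_mem_marginalFamily heval hP hmom))⟩
  obtain ⟨P, ⟨hPΓ, hPmin⟩, hPuniq⟩ := existsUnique_isMinOn_KL
    (integrable_exp_neg_sum_norm_sq_brownianReference hT hσ fun v => ⟨s v, hsS v, hs v⟩)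
    (fun P hP => hP.1) hφ (convex_marginalFamily heval)
    (isClosed_densitiesOf_marginalFamily heval) ⟨P₀, hP₀, hfin⟩
  exact ⟨P, hPΓ, ne_top_of_le_ne_top hfin (hPmin hP₀), hPmin, fun P' hP' hmin =>
    hPuniq P' ⟨hP', hmin⟩⟩

end SchrodingerBridge

/-- **Existence and uniqueness of the static tree-structured Schrödinger bridge.** Let `Q` be
the Brownian reference measure on `(ℝ^d)^V` attached to a finite tree `G` with edge lengths
`T`, let `S` be a nonempty set of vertices and `μ i` (for `i ∈ S`) probability measures with
Lebesgue densities having finite second moments and finite entropy.  Then there exists a unique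
probability measure `P*` on `(ℝ^d)^V` with marginal `μ i` at each `i ∈ S` minimising
`KL(· ‖ Q)` over all probability measures with these marginals, and its KL divergence is
finite. -/
theorem static_treeSB_exists_unique
    {V : Type*} [Fintype V] [DecidableEq V]
    (G : SimpleGraph V) [DecidableRel G.Adj] (hG : G.IsTree)
    (T : Sym2 V → ℝ) (hT_pos : ∀ e ∈ G.edgeFinset, 0 < T e)
    (σ : ℝ) (hσ : 0 < σ) (d : ℕ) (hd : 1 ≤ d)
    (Q : Measure (V → EuclideanSpace ℝ (Fin d)))
    (hQ : Q = volume.withDensity (fun x => ENNReal.ofReal (∏ e ∈ G.edgeFinset,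
      (2 * Real.pi * σ ^ 2 * T e) ^ (-(d : ℝ) / 2) *
        Real.exp (-(sqDist x e) / (2 * σ ^ 2 * T e)))))
    (S : Finset V) (hS : S.Nonempty)
    (μ : V → Measure (EuclideanSpace ℝ (Fin d)))
    (hμ_prob : ∀ i ∈ S, IsProbabilityMeasure (μ i))
    (p : V → EuclideanSpace ℝ (Fin d) → ℝ)
    (hp_meas : ∀ i ∈ S, Measurable (p i))
    (hp_nonneg : ∀ i ∈ S, ∀ y, 0 ≤ p i y)
    (hμ_dens : ∀ i ∈ S, μ i = volume.withDensity (fun y => ENNReal.ofReal (p i y)))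
    (hmom : ∀ i ∈ S, Integrable (fun y => ‖y‖ ^ 2) (μ i))
    (hent : ∀ i ∈ S, Integrable (fun y => Real.log (p i y)) (μ i)) :
    ∃ Pstar : Measure (V → EuclideanSpace ℝ (Fin d)),
      IsProbabilityMeasure Pstar ∧
      (∀ i ∈ S, Pstar.map (fun x => x i) = μ i) ∧
      KL Pstar Q ≠ ⊤ ∧
      (∀ P : Measure (V → EuclideanSpace ℝ (Fin d)), IsProbabilityMeasure P →
        (∀ i ∈ S, P.map (fun x => x i) = μ i) → KL Pstar Q ≤ KL P Q) ∧
      (∀ P : Measure (V → EuclideanSpace ℝ (Fin d)), IsProbabilityMeasure P →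
        (∀ i ∈ S, P.map (fun x => x i) = μ i) →
        (∀ P' : Measure (V → EuclideanSpace ℝ (Fin d)), IsProbabilityMeasure P' →
          (∀ i ∈ S, P'.map (fun x => x i) = μ i) → KL P Q ≤ KL P' Q) →
        P = Pstar) := by
  subst hQ
  obtain ⟨i₀, hi₀⟩ := hS
  obtain ⟨P, hP, hfin, hmin, huniq⟩ := static_treeSB_exists_unique_general (d := d) hT_pos hσ.ne'
    (fun v => ⟨i₀, hi₀, hG.connected i₀ v⟩) hμ_prob (fun i hi => hμ_dens i hi ▸
      KL_withDensity_left_ne_top (hp_meas i hi) (hμ_dens i hi ▸ hent i hi)) hmom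
  exact ⟨P, hP.1, hP.2, hfin, fun P' h₁ h₂ => hmin ⟨h₁, h₂⟩, fun P' h₁ h₂ h =>
    huniq P' ⟨h₁, h₂⟩ fun P'' h'' => h P'' h''.1 h''.2⟩
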